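/- Let g ∈ G with g(0) = 0. Then for every X ∈ L^1, inf_{n∈ℕ} (□_{i=1}^n ES^g)(X) ≥ E[X] > −∞; consequently, ES^g has limited regulatory arbitrage: ES^g(X) − inf_{n∈ℕ}(□_{i=1}^n ES^g)(X) < ∞ for every X ∈ L^1 with ES^g(X) < ∞. -/

import Mathlib

open MeasureTheory Set Filter

variable {Ω : Type*} [MeasurableSpace Ω]

/-- An atomless probability space: every set of positive measure has a subset of
strictly smaller positive measure. -/
def Atomless (μ : Measure Ω) : Prop :=
  ∀ A : Set Ω, MeasurableSet A → 0 < μ A →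
    ∃ B : Set Ω, MeasurableSet B ∧ B ⊆ A ∧ 0 < μ B ∧ μ B < μ A

/-- Value at Risk at level `p`: the left `p`-quantile for `p ∈ (0,1]`, the essential
infimum for `p = 0`.  Values are extended reals. -/
noncomputable def VaR (μ : Measure Ω) (X : Ω → ℝ) (p : ℝ) : EReal :=
  if p = 0 then essInf (fun ω => (X ω : EReal)) μ
  else sInf ((fun x : ℝ => (x : EReal)) '' {x : ℝ | ENNReal.ofReal p ≤ μ {ω | X ω ≤ x}})

/-- Real-valued version of the left `p`-quantile, used as the integrand of ES. -/
noncomputable def VaRr (μ : Measure Ω) (X : Ω → ℝ) (p : ℝ) : ℝ :=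
  sInf {x : ℝ | ENNReal.ofReal p ≤ μ {ω | X ω ≤ x}}

/-- Expected Shortfall at level `p`: `(1/(1-p)) ∫_p^1 VaR_q(X) dq` for `p ∈ [0,1)`,
the essential supremum for `p = 1`. -/
noncomputable def ES (μ : Measure Ω) (X : Ω → ℝ) (p : ℝ) : EReal :=
  if p = 1 then essSup (fun ω => (X ω : EReal)) μ
  else (((1 - p)⁻¹ * ∫ q in Set.Ioo p 1, VaRr μ X q : ℝ) : EReal)

/-- The `g`-adjusted Expected Shortfall, `sup_{p ∈ [0,1]} (ES_p(X) - g(p))`.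
Note that in `EReal` one has `⊤ - ⊤ = ⊥`, matching the convention `∞ - ∞ = -∞`. -/
noncomputable def adjES (μ : Measure Ω) (g : ℝ → EReal) (X : Ω → ℝ) : EReal :=
  ⨆ p ∈ Set.Icc (0:ℝ) 1, (ES μ X p - g p)

/-- The class `𝒢` of risk profiles: increasing functions `[0,1] → (-∞,∞]` that are
not identically `∞`. -/
def IsRiskProfile (g : ℝ → EReal) : Prop :=
  MonotoneOn g (Set.Icc (0:ℝ) 1) ∧ (∀ p ∈ Set.Icc (0:ℝ) 1, g p ≠ ⊥) ∧
    ∃ p ∈ Set.Icc (0:ℝ) 1, g p ≠ ⊤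

/-- Second-order stochastic dominance: `SSD μ X Y` means `X ≥_SSD Y`, i.e. every
risk-averse agent prefers `X` to `Y` (positive values are losses). -/
def SSD (μ : Measure Ω) (X Y : Ω → ℝ) : Prop :=
  ∀ u : ℝ → ℝ, Monotone u → ConcaveOn ℝ Set.univ u →
    ∫ ω, u (-(Y ω)) ∂μ ≤ ∫ ω, u (-(X ω)) ∂μ

/-- The inf-convolution of the functionals `ρ_1, …, ρ_n`. -/
noncomputable def infConv (μ : Measure Ω) {n : ℕ} (ρ : Fin n → ((Ω → ℝ) → EReal))
    (X : Ω → ℝ) : EReal :=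
  ⨅ (Y : Fin n → Ω → ℝ) (_ : (∀ i, Integrable (Y i) μ) ∧ ∀ ω, (∑ i, Y i ω) = X ω),
    ∑ i, ρ i (Y i)

/-- The class `𝒢_VaR`: risk profiles finite on `[0,1)`, left-continuous on `[0,1]`
and right-continuous at `0`. -/
def GVaRProfile (g : ℝ → EReal) : Prop :=
  IsRiskProfile g ∧ (∀ p ∈ Set.Ico (0:ℝ) 1, g p ≠ ⊤) ∧
    (∀ p ∈ Set.Ioc (0:ℝ) 1, Filter.Tendsto g (nhdsWithin p (Set.Ico 0 p)) (nhds (g p))) ∧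
    Filter.Tendsto g (nhdsWithin 0 (Set.Ioc 0 1)) (nhds (g 0))

/-- The class `𝒢_ES`: profiles in `𝒢_VaR` such that `h_g(p) = (1-p)g(p)` is concave
on `(0,1)` and left-continuous at `1` (with `h_g(1) = 0` by the convention `0·∞ = 0`). -/
def GESProfile (g : ℝ → EReal) : Prop :=
  GVaRProfile g ∧ ConcaveOn ℝ (Set.Ioo (0:ℝ) 1) (fun p => (1 - p) * (g p).toReal) ∧
    Filter.Tendsto (fun p => (1 - p) * (g p).toReal) (nhdsWithin 1 (Set.Ico (0:ℝ) 1)) (nhds 0)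

/-!
At level `0` the Expected Shortfall is the mean: `VaR_q(X)`, as a function of a uniform `q ∈ (0,1)`,
has the law of `X`, because `VaR_q(X) ≤ x` is equivalent to `q ≤ P(X ≤ x)`. Since `g(0) ≤ 0`, the
term `p = 0` of the supremum gives `ES^g ≥ E`. Expectation is additive, so the costs of the shares
of any split of `X` sum to at least `E[X]`.
-/

open ProbabilityTheory

theorem csInf_setOf_le_le_iff {α β : Type*} [ConditionallyCompleteLinearOrder α]
    [TopologicalSpace α] [OrderTopology α] [Preorder β] [TopologicalSpace β] [ClosedIciTopology β]
    {f : α → β} {c : β} {x : α} (hf : Monotone f) (hne : {y | c ≤ f y}.Nonempty)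
    (hbdd : BddBelow {y | c ≤ f y})
    (hcont : ContinuousWithinAt f (Ici (sInf {y | c ≤ f y})) (sInf {y | c ≤ f y})) :
    sInf {y | c ≤ f y} ≤ x ↔ c ≤ f x := by
  set S := {y | c ≤ f y}
  have attained : c ≤ f (sInf S) := by
    have hlim : Tendsto f (nhdsWithin (sInf S) S) (nhds (f (sInf S))) :=
      hcont.mono_left (nhdsWithin_mono _ fun _ hy => csInf_le hbdd hy)
    have : (nhdsWithin (sInf S) S).NeBot :=
      mem_closure_iff_nhdsWithin_neBot.mp (csInf_mem_closure hne hbdd)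
    exact ge_of_tendsto hlim self_mem_nhdsWithin
  exact ⟨fun h => attained.trans (hf h), fun h => csInf_le hbdd h⟩

section Quantile

variable {μ : Measure Ω} [IsProbabilityMeasure μ] {X : Ω → ℝ}

theorem VaRr_eq_csInf_cdf (hX : AEMeasurable X μ) (q : ℝ) :
    VaRr μ X q = sInf {x | q ≤ cdf (μ.map X) x} := by
  have := Measure.isProbabilityMeasure_map hX
  have measure_le (x : ℝ) : μ {ω | X ω ≤ x} = ENNReal.ofReal (cdf (μ.map X) x) := by
    rw [ofReal_cdf, Measure.map_apply_of_aemeasurable hX measurableSet_Iic]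
    rfl
  simp only [VaRr, measure_le, ENNReal.ofReal_le_ofReal_iff (cdf_nonneg _ _)]

theorem VaRr_le_iff_le_cdf (hX : AEMeasurable X μ) {q : ℝ} (hq : q ∈ Ioo (0 : ℝ) 1) (x : ℝ) :
    VaRr μ X q ≤ x ↔ q ≤ cdf (μ.map X) x := by
  rw [VaRr_eq_csInf_cdf hX]
  have hmono := monotone_cdf (μ.map X)
  obtain ⟨a, ha⟩ := ((tendsto_cdf_atBot (μ.map X)).eventually_lt_const hq.1).exists
  obtain ⟨b, hb⟩ := ((tendsto_cdf_atTop (μ.map X)).eventually_const_lt hq.2).exists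
  have hbdd : BddBelow {y | q ≤ cdf (μ.map X) y} :=
    ⟨a, fun _ hy => (hmono.reflect_lt (ha.trans_le hy)).le⟩
  exact csInf_setOf_le_le_iff hmono ⟨b, hb.le⟩ hbdd ((cdf (μ.map X)).right_continuous _)

theorem monotoneOn_VaRr (hX : AEMeasurable X μ) : MonotoneOn (VaRr μ X) (Ioo 0 1) :=
  fun _ hp _ hq hpq => (VaRr_le_iff_le_cdf hX hp _).mpr
    (hpq.trans ((VaRr_le_iff_le_cdf hX hq _).mp le_rfl))

theorem aemeasurable_VaRr (hX : AEMeasurable X μ) :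
    AEMeasurable (VaRr μ X) (volume.restrict (Ioo 0 1)) :=
  aemeasurable_restrict_of_monotoneOn measurableSet_Ioo (monotoneOn_VaRr hX)

theorem map_VaRr_eq_map (hX : AEMeasurable X μ) :
    (volume.restrict (Ioo 0 1)).map (VaRr μ X) = μ.map X := by
  have := Measure.isProbabilityMeasure_map hX
  refine Measure.ext_of_Iic _ _ fun x => ?_
  set c := cdf (μ.map X) x
  have preimage_ae_eq :
      VaRr μ X ⁻¹' Iic x =ᵐ[volume.restrict (Ioo (0 : ℝ) 1)] Iic c :=
    ae_restrict_of_forall_mem measurableSet_Ioo fun _ hq => propext (VaRr_le_iff_le_cdf hX hq x)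
  have hc : Iic c ∩ Ioc 0 1 = Ioc 0 c := by
    rw [inter_comm, Ioc_inter_Iic, min_eq_right (cdf_le_one _ x)]
  calc (volume.restrict (Ioo 0 1)).map (VaRr μ X) (Iic x)
      = volume.restrict (Ioo 0 1) (VaRr μ X ⁻¹' Iic x) :=
        Measure.map_apply_of_aemeasurable (aemeasurable_VaRr hX) measurableSet_Iic
    _ = volume.restrict (Ioo 0 1) (Iic c) := measure_congr preimage_ae_eq
    _ = volume (Ioc 0 c) := by
        rw [restrict_Ioo_eq_restrict_Ioc, Measure.restrict_apply measurableSet_Iic, hc]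
    _ = μ.map X (Iic x) := by rw [Real.volume_Ioc, sub_zero, ofReal_cdf]

theorem integral_VaRr (hX : AEMeasurable X μ) :
    ∫ q in Ioo 0 1, VaRr μ X q = ∫ ω, X ω ∂μ :=
  calc ∫ q in Ioo 0 1, VaRr μ X q
      = ∫ x, x ∂(volume.restrict (Ioo 0 1)).map (VaRr μ X) :=
        (integral_map (aemeasurable_VaRr hX) aestronglyMeasurable_id).symm
    _ = ∫ x, x ∂μ.map X := by rw [map_VaRr_eq_map hX]
    _ = ∫ ω, X ω ∂μ := integral_map hX aestronglyMeasurable_id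

theorem ES_zero (hX : AEMeasurable X μ) : ES μ X 0 = ((∫ ω, X ω ∂μ : ℝ) : EReal) := by
  rw [ES, if_neg zero_ne_one, integral_VaRr hX, sub_zero, inv_one, one_mul]

theorem integral_le_adjES {g : ℝ → EReal} (hg0 : g 0 ≤ 0) (hX : AEMeasurable X μ) :
    ((∫ ω, X ω ∂μ : ℝ) : EReal) ≤ adjES μ g X :=
  calc ((∫ ω, X ω ∂μ : ℝ) : EReal)
      = ES μ X 0 - 0 := by rw [ES_zero hX, sub_zero]
    _ ≤ ES μ X 0 - g 0 := EReal.sub_le_sub le_rfl hg0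
    _ ≤ adjES μ g X := le_iSup₂ (f := fun p (_ : p ∈ Icc (0 : ℝ) 1) => ES μ X p - g p) 0
        (left_mem_Icc.mpr zero_le_one)

end Quantile

theorem ereal_coe_sum {ι : Type*} (s : Finset ι) (f : ι → ℝ) :
    ((∑ i ∈ s, f i : ℝ) : EReal) = ∑ i ∈ s, (f i : EReal) :=
  map_sum (⟨⟨Real.toEReal, EReal.coe_zero⟩, EReal.coe_add⟩ : ℝ →+ EReal) f s

theorem integral_le_infConv {μ : Measure Ω} {n : ℕ} {ρ : Fin n → (Ω → ℝ) → EReal}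
    (hρ : ∀ i Y, Integrable Y μ → ((∫ ω, Y ω ∂μ : ℝ) : EReal) ≤ ρ i Y) (X : Ω → ℝ) :
    ((∫ ω, X ω ∂μ : ℝ) : EReal) ≤ infConv μ ρ X := by
  refine le_iInf₂ fun Y ⟨hY, hsum⟩ => ?_
  calc ((∫ ω, X ω ∂μ : ℝ) : EReal)
      = ((∑ i, ∫ ω, Y i ω ∂μ : ℝ) : EReal) := by
        simp only [← hsum, integral_finsetSum _ fun i _ => hY i]
    _ = ∑ i, ((∫ ω, Y i ω ∂μ : ℝ) : EReal) := ereal_coe_sum _ _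
    _ ≤ ∑ i, ρ i (Y i) := Finset.sum_le_sum fun i _ => hρ i (Y i) (hY i)

theorem stmt8_general (μ : Measure Ω) [IsProbabilityMeasure μ] {g : ℝ → EReal} (hg0 : g 0 ≤ 0)
    (X : Ω → ℝ) :
    (((∫ ω, X ω ∂μ : ℝ) : EReal)
        ≤ ⨅ (n : ℕ) (_ : 0 < n), infConv μ (fun _ : Fin n => adjES μ g) X) ∧
    (⨅ (n : ℕ) (_ : 0 < n), infConv μ (fun _ : Fin n => adjES μ g) X) ≠ ⊥ ∧
    (adjES μ g X ≠ ⊤ →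
      adjES μ g X - (⨅ (n : ℕ) (_ : 0 < n), infConv μ (fun _ : Fin n => adjES μ g) X)
        ≠ ⊤) := by
  set I := ⨅ (n : ℕ) (_ : 0 < n), infConv μ (fun _ : Fin n => adjES μ g) X
  have integral_le : ((∫ ω, X ω ∂μ : ℝ) : EReal) ≤ I :=
    le_iInf₂ fun _ _ =>
      integral_le_infConv (fun _ _ hY => integral_le_adjES hg0 hY.aemeasurable) X
  have ne_bot : I ≠ ⊥ := ne_bot_of_le_ne_bot (EReal.coe_ne_bot _) integral_le
  exact ⟨integral_le, ne_bot, fun h => EReal.add_ne_top h (mt EReal.neg_eq_top_iff.mp ne_bot)⟩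

/-- Let `g ∈ 𝒢` with `g(0) = 0`. Then for every `X ∈ L¹` the
infimum over `n` of the `n`-fold inf-convolutions of `ES^g` is at least `E[X]`
(hence `> -∞`), and consequently `ES^g` has limited regulatory arbitrage:
`ES^g(X) - inf_n (□_{i=1}^n ES^g)(X) < ∞` whenever `ES^g(X) < ∞`. -/
theorem stmt8 (μ : Measure Ω) [IsProbabilityMeasure μ] (hatomless : Atomless μ)
    (g : ℝ → EReal) (hg : IsRiskProfile g) (hg0 : g 0 = 0)
    (X : Ω → ℝ) (hX : Integrable X μ) :
    (((∫ ω, X ω ∂μ : ℝ) : EReal)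
        ≤ ⨅ (n : ℕ) (_ : 0 < n), infConv μ (fun _ : Fin n => adjES μ g) X) ∧
    (⨅ (n : ℕ) (_ : 0 < n), infConv μ (fun _ : Fin n => adjES μ g) X) ≠ ⊥ ∧
    (adjES μ g X ≠ ⊤ →
      adjES μ g X - (⨅ (n : ℕ) (_ : 0 < n), infConv μ (fun _ : Fin n => adjES μ g) X)
        ≠ ⊤) :=
  stmt8_general μ hg0.le X
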